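/- arXiv:0907.1563 — 2 statements merged into one kernel-verified Lean document; each statement's English description precedes it below -/
import Mathlib

section
/- Let p be a prime, q = p^r, n ≥ 2 an integer with p ∤ n, and χ a Dirichlet character modulo q with χ(−1) = −1. Define h(a) = (n−1)/2 − ⌊na/q⌋ for 1 ≤ a ≤ q−1 with p ∤ a. Then the Fourier coefficient Σ_a h(a)·conj(χ(a)) (summing over 1 ≤ a ≤ q−1, p ∤ a) is nonzero. -/
open Finset

/-!
Reducing `n * a` modulo `q` turns `∑ ⌊n a / q⌋ χ(a)` into a multiple of the first moment
`S(χ) = ∑ a χ(a)`: the Fourier coefficient is the complex conjugate of `(χ⁻¹(n) - n) S(χ) / q`,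
and `|χ⁻¹(n)| ≤ 1 < n`.

The first moment is a special value, `L(0, χ) = -S(χ) / q`, because `ζ(0, x) = 1 / 2 - x` for the
Hurwitz zeta function. For `χ` odd and primitive the functional equation moves `L(0, χ)` to
`L(1, χ⁻¹) ≠ 0`; for `χ` induced from a primitive `χ'`, `L(0, χ)` acquires the Euler factors
`1 - χ'(l)` at the primes `l ∣ q`. For a nontrivial character modulo a power of `p` the only such
factor is `1 - χ'(p) = 1`, since `p` divides the conductor.
-/

section SecondDifference

theorem norm_sub_sub_smul_le_of_norm_hasDerivWithin_le {𝕜 E : Type*} [RCLike 𝕜]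
    [NormedAddCommGroup E] [NormedSpace 𝕜 E] {f f' f'' : 𝕜 → E} {s : Set 𝕜} {C : ℝ}
    (hf : ∀ x ∈ s, HasDerivWithinAt f (f' x) s x) (hf' : ∀ x ∈ s, HasDerivWithinAt f' (f'' x) s x)
    (bound : ∀ x ∈ s, ‖f'' x‖ ≤ C) (hs : Convex ℝ s) {x y : 𝕜} (hx : x ∈ s) (hy : y ∈ s) :
    ‖f y - f x - (y - x) • f' x‖ ≤ C * ‖y - x‖ ^ 2 := by
  have hC : 0 ≤ C := (norm_nonneg _).trans (bound x hx)
  have hsub : segment ℝ x y ⊆ s := hs.segment_subset hx hy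
  have deriv_bound : ∀ t ∈ segment ℝ x y, ‖f' t - f' x‖ ≤ C * ‖y - x‖ := fun t ht ↦
    calc ‖f' t - f' x‖ ≤ C * ‖t - x‖ :=
          hs.norm_image_sub_le_of_norm_hasDerivWithin_le hf' bound hx (hsub ht)
      _ ≤ C * ‖y - x‖ := by gcongr; exact norm_sub_le_of_mem_segment ht
  have hderiv : ∀ t ∈ segment ℝ x y, HasDerivWithinAt (fun z ↦ f z - (z - x) • f' x)
      (f' t - f' x) (segment ℝ x y) t := fun t ht ↦ by
    simpa using ((hf t (hsub ht)).mono hsub).fun_sub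
      (((hasDerivWithinAt_id t _).sub_const x).smul_const (f' x))
  have := (convex_segment x y).norm_image_sub_le_of_norm_hasDerivWithin_le hderiv deriv_bound
    (left_mem_segment ℝ x y) (right_mem_segment ℝ x y)
  rw [sub_self, zero_smul, sub_zero, sub_right_comm] at this
  rwa [sq, ← mul_assoc]

theorem norm_smul_sub_sub_smul_sub_le {E : Type*} [NormedAddCommGroup E] [NormedSpace ℝ E]
    {f f' f'' : ℝ → E} {a b c C : ℝ} (hab : a ≤ b) (hbc : b ≤ c)
    (hf : ∀ t ∈ Set.Icc a c, HasDerivAt f (f' t) t)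
    (hf' : ∀ t ∈ Set.Icc a c, HasDerivAt f' (f'' t) t) (bound : ∀ t ∈ Set.Icc a c, ‖f'' t‖ ≤ C) :
    ‖(c - b) • (f a - f b) - (b - a) • (f b - f c)‖ ≤ C * ((b - a) * (c - b) * (c - a)) := by
  have taylor : ∀ t ∈ Set.Icc a c, ‖f t - f b - (t - b) • f' b‖ ≤ C * (t - b) ^ 2 := fun t ht ↦ by
    simpa using norm_sub_sub_smul_le_of_norm_hasDerivWithin_le
      (fun t ht ↦ (hf t ht).hasDerivWithinAt) (fun t ht ↦ (hf' t ht).hasDerivWithinAt) bound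
      (convex_Icc a c) ⟨hab, hbc⟩ ht
  have hac := hab.trans hbc
  calc ‖(c - b) • (f a - f b) - (b - a) • (f b - f c)‖
      = ‖(c - b) • (f a - f b - (a - b) • f' b) + (b - a) • (f c - f b - (c - b) • f' b)‖ := by
        congr 1; module
    _ ≤ (c - b) * (C * (a - b) ^ 2) + (b - a) * (C * (c - b) ^ 2) := by
        refine norm_add_le_of_le ?_ ?_ <;> rw [norm_smul, Real.norm_of_nonneg (by linarith)]
        · gcongr
          exact taylor a ⟨le_rfl, hac⟩
        · gcongr
          exact taylor c ⟨hac, le_rfl⟩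
    _ = C * ((b - a) * (c - b) * (c - a)) := by ring

theorem hasDerivAt_ofReal_cpow_of_pos {t : ℝ} (ht : 0 < t) (r : ℂ) :
    HasDerivAt (fun y : ℝ ↦ (y : ℂ) ^ r) (r * (t : ℂ) ^ (r - 1)) t := by
  simpa using ((hasDerivAt_id (t : ℂ)).cpow_const (c := r)
    (Complex.ofReal_mem_slitPlane.2 ht)).comp_ofReal

theorem norm_ofReal_cpow_neg_second_difference_le {s : ℂ} (hs : -2 ≤ s.re) {a b c : ℝ} (ha : 0 < a)
    (hab : a ≤ b) (hbc : b ≤ c) :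
    ‖((c - b : ℝ) : ℂ) * ((a : ℂ) ^ (-s) - (b : ℂ) ^ (-s)) -
        ((b - a : ℝ) : ℂ) * ((b : ℂ) ^ (-s) - (c : ℂ) ^ (-s))‖ ≤
      ‖s * (s + 1)‖ * a ^ (-s.re - 2) * ((b - a) * (c - b) * (c - a)) := by
  have pos : ∀ t ∈ Set.Icc a c, 0 < t := fun t ht ↦ ha.trans_le ht.1
  refine norm_smul_sub_sub_smul_sub_le (f := fun t ↦ (t : ℂ) ^ (-s))
    (f' := fun t ↦ -s * (t : ℂ) ^ (-s - 1))
    (f'' := fun t ↦ -s * ((-s - 1) * (t : ℂ) ^ (-s - 1 - 1))) hab hbc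
    (fun t ht ↦ hasDerivAt_ofReal_cpow_of_pos (pos t ht) _)
    (fun t ht ↦ (hasDerivAt_ofReal_cpow_of_pos (pos t ht) _).const_mul _) fun t ht ↦ ?_
  calc ‖-s * ((-s - 1) * (t : ℂ) ^ (-s - 1 - 1))‖ = ‖s * (s + 1)‖ * t ^ (-s.re - 2) := by
        rw [← mul_assoc, show -s * (-s - 1) = s * (s + 1) by ring, norm_mul,
          Complex.norm_cpow_eq_rpow_re_of_pos (pos t ht)]
        have hre : (-s - 1 - 1).re = -s.re - 2 := by
          simp only [Complex.sub_re, Complex.neg_re, Complex.one_re]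
          ring
        rw [hre]
    _ ≤ ‖s * (s + 1)‖ * a ^ (-s.re - 2) := by
        gcongr ?_ * ?_
        exact Real.rpow_le_rpow_of_nonpos ha ht.1 (by linarith)

end SecondDifference

section HurwitzZeta

open HurwitzZeta

/-- The `n`-th term of a series for `ζ(s, x) - ζ(s) - (1 - x)`, with `n` starting at `0`. The
constant is spread out as the telescoping sum `(1 - x) ∑ ((n + 1)⁻ˢ - (n + 2)⁻ˢ)`; this makes the
terms second differences of `t⁻ˢ`, so that the series converges for `-1 < re s`. -/
noncomputable def hurwitzTerm (x : ℝ) (n : ℕ) (s : ℂ) : ℂ :=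
  (((n + x : ℝ) : ℂ) ^ (-s) - ((n + 1 : ℝ) : ℂ) ^ (-s)) -
    (1 - x) * (((n + 1 : ℝ) : ℂ) ^ (-s) - ((n + 2 : ℝ) : ℂ) ^ (-s))

variable {x : ℝ}

theorem differentiable_hurwitzTerm (hx : 0 < x) (n : ℕ) : Differentiable ℂ (hurwitzTerm x n) := by
  have diff_cpow {b : ℝ} (hb : 0 < b) : Differentiable ℂ fun s : ℂ ↦ (b : ℂ) ^ (-s) := fun s ↦
    differentiableAt_id.neg.const_cpow (.inl (Complex.ofReal_ne_zero.2 hb.ne'))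
  exact ((diff_cpow (by positivity)).sub (diff_cpow (by positivity))).sub
    (((diff_cpow (by positivity)).sub (diff_cpow (by positivity))).const_mul _)

theorem norm_hurwitzTerm_le (hx : 0 < x) (hx1 : x ≤ 1) (n : ℕ) {s : ℂ} (hs : -2 ≤ s.re) :
    ‖hurwitzTerm x n s‖ ≤ 2 * ‖s * (s + 1)‖ * (n + x) ^ (-s.re - 2) := by
  have h := norm_ofReal_cpow_neg_second_difference_le hs (a := n + x) (b := n + 1) (c := n + 2)
    (by positivity) (by linarith) (by linarith)
  have hlen : (n + 1 - (n + x)) * (n + 2 - (n + 1)) * (n + 2 - (n + x)) ≤ 2 := by nlinarith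
  calc ‖hurwitzTerm x n s‖
      ≤ ‖s * (s + 1)‖ * (n + x) ^ (-s.re - 2) *
          ((n + 1 - (n + x)) * (n + 2 - (n + 1)) * (n + 2 - (n + x))) := by
        convert h using 2
        rw [hurwitzTerm]
        push_cast
        ring
    _ ≤ ‖s * (s + 1)‖ * (n + x) ^ (-s.re - 2) * 2 := by gcongr
    _ = 2 * ‖s * (s + 1)‖ * (n + x) ^ (-s.re - 2) := by ring

theorem summableLocallyUniformlyOn_hurwitzTerm (hx : 0 < x) (hx1 : x ≤ 1) :
    SummableLocallyUniformlyOn (hurwitzTerm x) {s : ℂ | -1 < s.re} := by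
  refine .of_locally_bounded_eventually (isOpen_lt continuous_const Complex.continuous_re)
    fun K hK hKc ↦ ?_
  obtain ⟨σ, hσ, hσK⟩ := hKc.exists_forall_le' Complex.continuous_re.continuousOn hK
  obtain ⟨C, hC⟩ := hKc.exists_bound_of_continuousOn (f := fun s : ℂ ↦ s * (s + 1)) (by fun_prop)
  refine ⟨fun n ↦ 2 * C * (n : ℝ) ^ (-σ - 2),
    (Real.summable_nat_rpow.2 (by linarith)).mul_left _, ?_⟩
  filter_upwards [(Set.finite_singleton 0).compl_mem_cofinite] with n hn s hs
  have hn1 : (1 : ℝ) ≤ n := Nat.one_le_cast.2 (Nat.one_le_iff_ne_zero.2 hn)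
  have hσs := hσK s hs
  calc ‖hurwitzTerm x n s‖ ≤ 2 * ‖s * (s + 1)‖ * (n + x) ^ (-s.re - 2) :=
        norm_hurwitzTerm_le hx hx1 n (by linarith)
    _ ≤ 2 * C * (n : ℝ) ^ (-σ - 2) := by
        have hC0 : 0 ≤ C := (norm_nonneg _).trans (hC s hs)
        gcongr ?_ * ?_
        · gcongr
          exact hC s hs
        · calc ((n : ℝ) + x) ^ (-s.re - 2) ≤ (n : ℝ) ^ (-s.re - 2) :=
                Real.rpow_le_rpow_of_nonpos (by linarith) (by linarith) (by linarith)
            _ ≤ (n : ℝ) ^ (-σ - 2) := Real.rpow_le_rpow_of_exponent_le hn1 (by linarith)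

theorem hasSum_hurwitzTerm_of_one_lt_re (hx : 0 ≤ x) (hx1 : x ≤ 1) {s : ℂ} (hs : 1 < s.re) :
    HasSum (fun n ↦ hurwitzTerm x n s) (hurwitzZeta x s - hurwitzZeta 0 s - (1 - x)) := by
  have hzeta : HasSum (fun n : ℕ ↦ ((n + 1 : ℝ) : ℂ) ^ (-s)) (hurwitzZeta 0 s) := by
    have := hasSum_hurwitzZeta_of_one_lt_re (a := 1) (by simp) hs
    simpa [Complex.cpow_neg, AddCircle.coe_period] using this
  have hhurwitz : HasSum (fun n : ℕ ↦ ((n + x : ℝ) : ℂ) ^ (-s)) (hurwitzZeta x s) := by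
    simpa [Complex.cpow_neg] using hasSum_hurwitzZeta_of_one_lt_re ⟨hx, hx1⟩ hs
  have htail : HasSum (fun n : ℕ ↦ ((n + 2 : ℝ) : ℂ) ^ (-s)) (hurwitzZeta 0 s - 1) := by
    simpa [add_assoc, one_add_one_eq_two] using (hasSum_nat_add_iff' 1).2 hzeta
  simpa [hurwitzTerm] using (hhurwitz.sub hzeta).sub ((hzeta.sub htail).mul_left (1 - x : ℂ))

theorem tsum_hurwitzTerm (hx : 0 < x) (hx1 : x ≤ 1) {s : ℂ} (hs : -1 < s.re) :
    ∑' n, hurwitzTerm x n s = hurwitzZeta x s - hurwitzZeta 0 s - (1 - x) := by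
  set U : Set ℂ := {s | -1 < s.re}
  have hU : IsOpen U := isOpen_lt continuous_const Complex.continuous_re
  have hsum : AnalyticOnNhd ℂ (fun s ↦ ∑' n, hurwitzTerm x n s) U :=
    ((summableLocallyUniformlyOn_hurwitzTerm hx hx1).differentiableOn hU
      fun n s _ ↦ differentiable_hurwitzTerm hx n s).analyticOnNhd hU
  have hzeta : AnalyticOnNhd ℂ (fun s ↦ hurwitzZeta x s - hurwitzZeta 0 s - (1 - x)) U :=
    ((differentiable_hurwitzZeta_sub_hurwitzZeta x 0).sub_const _).differentiableOn.analyticOnNhd hU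
  refine hsum.eqOn_of_preconnected_of_eventuallyEq hzeta
    (convex_halfSpace_re_gt (-1)).isPreconnected (z₀ := 2)
    (show -1 < (2 : ℂ).re by norm_num) ?_ hs
  filter_upwards [(isOpen_lt continuous_const Complex.continuous_re).mem_nhds
    (show (1 : ℝ) < (2 : ℂ).re by simp)] with s hs
  exact (hasSum_hurwitzTerm_of_one_lt_re hx.le hx1 hs).tsum_eq

theorem hurwitzZeta_apply_zero (hx : 0 < x) (hx1 : x ≤ 1) :
    hurwitzZeta (x : UnitAddCircle) 0 = 1 / 2 - x := by
  have h : hurwitzZeta (x : UnitAddCircle) 0 - -1 / 2 - (1 - x) = 0 := by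
    simpa [hurwitzTerm, hurwitzZeta_zero, riemannZeta_zero, eq_comm] using
      tsum_hurwitzTerm hx hx1 (s := 0) (by simp)
  linear_combination h

end HurwitzZeta

section MulCharSums

variable {M R : Type*} [CommMonoid M] [Fintype M] [CommRing R]

theorem sum_comp_units_mul_mul_mulChar (u : Mˣ) (f : M → R) (χ : MulChar M R) :
    ∑ j, f (u * j) * χ j = χ⁻¹ u * ∑ j, f j * χ j := by
  have hu : χ⁻¹ u * χ u = 1 := by rw [← MulChar.mul_apply, inv_mul_cancel, MulChar.one_apply_coe]
  rw [← Equiv.sum_comp (Units.mulLeft u) fun j ↦ f j * χ j, mul_sum]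
  refine sum_congr rfl fun j _ ↦ ?_
  rw [Units.mulLeft_apply, map_mul]
  linear_combination (-f (u * j) * χ j) * hu

end MulCharSums

section FirstMoment

variable {q : ℕ} [NeZero q]

/-- The first moment `S_q(χ) = ∑ a χ(a)` of a Dirichlet character modulo `q`, over the residues
`0 ≤ a < q`. For `χ ≠ 1` it is `q` times the generalized Bernoulli number `B_{1,χ}`. -/
def firstMoment {R : Type*} [CommRing R] (χ : DirichletCharacter R q) : R :=
  ∑ j : ZMod q, (j.val : R) * χ j

theorem level_mul_sum_div_mul {R : Type*} [CommRing R] (χ : DirichletCharacter R q) {n : ℕ}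
    (hn : n.Coprime q) :
    (q : R) * ∑ j : ZMod q, ((n * j.val / q : ℕ) : R) * χ j = (n - χ⁻¹ n) * firstMoment χ := by
  obtain ⟨u, hu⟩ := (ZMod.isUnit_iff_coprime n q).2 hn
  have hdiv (j : ZMod q) :
      (q : R) * ((n * j.val / q : ℕ) : R) = n * j.val - ((u * j : ZMod q).val : R) := by
    have hmod : (u * j : ZMod q).val = n * j.val % q := by
      rw [hu, ← ZMod.val_natCast, Nat.cast_mul, ZMod.natCast_zmod_val]
    rw [hmod, eq_sub_iff_add_eq]
    exact_mod_cast congrArg (Nat.cast : ℕ → R) (Nat.div_add_mod (n * j.val) q)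
  calc (q : R) * ∑ j : ZMod q, ((n * j.val / q : ℕ) : R) * χ j
      = ∑ j : ZMod q, (n * (j.val * χ j) - (u * j : ZMod q).val * χ j) := by
        rw [mul_sum]
        refine sum_congr rfl fun j _ ↦ ?_
        rw [← mul_assoc, hdiv, sub_mul, mul_assoc]
    _ = (n - χ⁻¹ n) * firstMoment χ := by
        rw [sum_sub_distrib, ← mul_sum,
          sum_comp_units_mul_mul_mulChar u (fun j : ZMod q ↦ (j.val : R)), hu, firstMoment, sub_mul]

theorem sum_const_sub_div_mul {K : Type*} [Field K] [CharZero K] {χ : DirichletCharacter K q}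
    (hχ : χ ≠ 1) {n : ℕ} (hn : n.Coprime q) (c : K) :
    ∑ j : ZMod q, (c - ((n * j.val / q : ℕ) : K)) * χ j = (χ⁻¹ n - n) * firstMoment χ / q := by
  have hq : (q : K) ≠ 0 := NeZero.ne _
  simp only [sub_mul, sum_sub_distrib]
  rw [← mul_sum, χ.sum_eq_zero_of_ne_one hχ, eq_div_iff hq]
  linear_combination -level_mul_sum_div_mul χ hn

open DirichletCharacter HurwitzZeta

theorem LFunction_apply_zero_eq_neg_firstMoment_div {χ : DirichletCharacter ℂ q} (hχ : χ ≠ 1) :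
    LFunction χ 0 = -firstMoment χ / q := by
  have hq1 : q ≠ 1 := fun h ↦ hχ (level_one' _ h)
  have hq0 : (0 : ℝ) < q := Nat.cast_pos.2 (NeZero.pos q)
  have hterm (j : ZMod q) :
      χ j * hurwitzZeta (ZMod.toAddCircle j) 0 = 1 / 2 * χ j - j.val * χ j / q := by
    rcases eq_or_ne j 0 with rfl | hj
    · simp [χ.map_zero' hq1]
    · have hval : 0 < j.val := ZMod.val_pos.2 hj
      rw [ZMod.toAddCircle_apply, hurwitzZeta_apply_zero (by positivity)
        ((div_le_one hq0).2 (Nat.cast_le.2 j.val_lt.le))]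
      push_cast
      ring
  rw [LFunction, ZMod.LFunction, sum_congr rfl fun j _ ↦ hterm j, sum_sub_distrib, ← mul_sum,
    χ.sum_eq_zero_of_ne_one hχ, ← sum_div, firstMoment]
  simp [neg_div]

end FirstMoment

section OddCharacters

open DirichletCharacter

theorem ne_one_of_odd {R : Type*} [CommRing R] [NeZero (2 : R)] {q : ℕ} {χ : DirichletCharacter R q}
    (hχ : χ.Odd) : χ ≠ 1 := by
  rintro rfl
  exact hχ.not_even _ (MulChar.one_apply isUnit_one.neg)

theorem primitiveCharacter_odd {R : Type*} [CommRing R] {q : ℕ} {χ : DirichletCharacter R q}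
    (hχ : χ.Odd) : χ.primitiveCharacter.Odd := by
  have := χ.primitiveCharacter_apply_of_isCoprime (a := -1) isCoprime_one_left.neg_left
  rw [DirichletCharacter.Odd] at hχ ⊢
  simpa [hχ] using this

variable {q : ℕ} [NeZero q] {χ : DirichletCharacter ℂ q}

theorem LFunction_apply_zero_ne_zero_of_isPrimitive (hprim : χ.IsPrimitive) (hχ : χ.Odd) :
    LFunction χ 0 ≠ 0 := by
  have hχ1 : χ ≠ 1 := ne_one_of_odd hχ
  have hq : q ≠ 1 := fun h ↦ hχ1 (level_one' _ h)
  have hinv : χ⁻¹.IsPrimitive := by rwa [isPrimitive_def, conductor_inv]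
  have hcompleted : completedLFunction χ 0 ≠ 0 := by
    intro h0
    apply LFunction_apply_one_ne_zero (inv_ne_one.2 hχ1)
    have hfe := hinv.completedLFunction_one_sub 0
    rw [sub_zero, inv_inv, h0, mul_zero] at hfe
    rw [LFunction_eq_completed_div_gammaFactor _ _ (.inr hq), hfe, zero_div]
  rw [LFunction_eq_completed_div_gammaFactor _ _ (.inr hq), hχ.gammaFactor_def]
  exact div_ne_zero hcompleted (Complex.Gammaℝ_ne_zero_of_re_pos (by simp))

theorem LFunction_apply_zero_ne_zero_iff (hχ : χ.Odd) :
    LFunction χ 0 ≠ 0 ↔ ∀ l ∈ q.primeFactors, χ.primitiveCharacter l ≠ 1 := by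
  have : NeZero χ.conductor := ⟨χ.conductor_ne_zero⟩
  have hprim := primitiveCharacter_odd hχ
  have hfactor : LFunction χ 0 =
      LFunction χ.primitiveCharacter 0 * ∏ l ∈ q.primeFactors, (1 - χ.primitiveCharacter l) := by
    conv_lhs => rw [← χ.changeLevel_primitiveCharacter]
    simpa using LFunction_changeLevel χ.conductor_dvd_level χ.primitiveCharacter (s := 0)
      (.inl (ne_one_of_odd hprim))
  have h0 := LFunction_apply_zero_ne_zero_of_isPrimitive χ.primitiveCharacter_isPrimitive hprim
  rw [hfactor, mul_ne_zero_iff_left h0, prod_ne_zero_iff]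
  simp only [sub_ne_zero, ne_comm (a := (1 : ℂ))]

theorem firstMoment_ne_zero_iff (hχ : χ.Odd) :
    firstMoment χ ≠ 0 ↔ ∀ l ∈ q.primeFactors, χ.primitiveCharacter l ≠ 1 := by
  rw [← LFunction_apply_zero_ne_zero_iff hχ,
    LFunction_apply_zero_eq_neg_firstMoment_div (ne_one_of_odd hχ)]
  simp [NeZero.ne q]

end OddCharacters

theorem dirichletCharacter_apply_ne_natCast {q n : ℕ} (hn : 2 ≤ n) (χ : DirichletCharacter ℂ q)
    (a : ZMod q) : χ a ≠ n := by
  intro h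
  have hle : (n : ℝ) ≤ 1 := by simpa [h] using χ.norm_le_one a
  exact (Nat.lt_of_succ_le hn).not_ge (Nat.cast_le_one.1 hle)

theorem sum_zmod_eq_sum_range {M : Type*} [AddCommMonoid M] (q : ℕ) [NeZero q] (f : ℕ → M) :
    ∑ j : ZMod q, f j.val = ∑ a ∈ range q, f a :=
  sum_nbij' ZMod.val Nat.cast (by simp [ZMod.val_lt]) (by simp) (by simp)
    (fun a ha ↦ ZMod.val_cast_of_lt (mem_range.1 ha)) (by simp)

theorem sum_filter_coprime_mul_conj_dirichletCharacter {q : ℕ} [NeZero q] (c : ℕ → ℝ)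
    (χ : DirichletCharacter ℂ q) :
    ∑ a ∈ range q with a.Coprime q, (c a : ℂ) * starRingEnd ℂ (χ a) =
      starRingEnd ℂ (∑ j : ZMod q, (c j.val : ℂ) * χ j) := by
  have hsum := sum_zmod_eq_sum_range q fun a ↦ (c a : ℂ) * starRingEnd ℂ (χ a)
  simp only [ZMod.natCast_zmod_val] at hsum
  rw [sum_filter_of_ne, ← hsum]
  · simp
  · intro a _ ha
    contrapose! ha
    rw [MulChar.map_nonunit _ (mt (ZMod.isUnit_iff_coprime a q).1 ha)]
    simp

theorem primitiveCharacter_apply_eq_zero_of_prime_pow {R : Type*} [CommRing R] {p r : ℕ}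
    (hp : p.Prime) {χ : DirichletCharacter R (p ^ r)} (hχ : χ ≠ 1) :
    χ.primitiveCharacter p = 0 := by
  have : NeZero p := ⟨hp.ne_zero⟩
  obtain ⟨k, -, hk⟩ := (Nat.dvd_prime_pow hp).1 χ.conductor_dvd_level
  have hk0 : k ≠ 0 := by
    rintro rfl
    exact hχ (χ.eq_one_iff_conductor_eq_one.2 (by rwa [pow_zero] at hk))
  exact MulChar.map_nonunit _ fun hunit ↦
    (ZMod.isUnit_prime_iff_not_dvd hp).1 hunit (hk ▸ dvd_pow_self p hk0)

theorem primitiveCharacter_apply_primeFactor_ne_one_of_prime_pow {R : Type*} [CommRing R]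
    [Nontrivial R] {p r l : ℕ} (hp : p.Prime) {χ : DirichletCharacter R (p ^ r)} (hχ : χ ≠ 1)
    (hl : l ∈ (p ^ r).primeFactors) : χ.primitiveCharacter l ≠ 1 := by
  have hlp : l = p := (Nat.prime_dvd_prime_iff_eq (Nat.prime_of_mem_primeFactors hl) hp).1
    ((Nat.prime_of_mem_primeFactors hl).dvd_of_dvd_pow (Nat.dvd_of_mem_primeFactors hl))
  rw [hlp, primitiveCharacter_apply_eq_zero_of_prime_pow hp hχ]
  exact zero_ne_one

theorem coprime_prime_pow_iff_not_dvd {p r : ℕ} (hp : p.Prime) (hr : r ≠ 0) (a : ℕ) :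
    a.Coprime (p ^ r) ↔ ¬ p ∣ a := by
  rw [Nat.coprime_pow_right_iff hr.bot_lt, Nat.coprime_comm, hp.coprime_iff_not_dvd]

theorem stmt5_general {q n : ℕ} [NeZero q] (hn : 2 ≤ n) (hnq : n.Coprime q)
    {χ : DirichletCharacter ℂ q} (hχ : χ.Odd) :
    ∑ a ∈ range q with a.Coprime q,
        (((n : ℂ) - 1) / 2 - ((n * a / q : ℕ) : ℂ)) * starRingEnd ℂ (χ a) ≠ 0 ↔
      ∀ l ∈ q.primeFactors, χ.primitiveCharacter l ≠ 1 := by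
  have hsum := sum_filter_coprime_mul_conj_dirichletCharacter
    (fun a ↦ ((n : ℝ) - 1) / 2 - ((n * a / q : ℕ) : ℝ)) χ
  push_cast at hsum
  rw [hsum, sum_const_sub_div_mul (ne_one_of_odd hχ) hnq, map_ne_zero, div_ne_zero_iff,
    mul_ne_zero_iff, firstMoment_ne_zero_iff hχ]
  simp [sub_ne_zero, dirichletCharacter_apply_ne_natCast hn, NeZero.ne q]

/-- Let `p` be a prime, `q = p^r`, `n ≥ 2` with `p ∤ n`, and `χ` a Dirichlet character
modulo `q` with `χ(−1) = −1`. With `h(a) = (n−1)/2 − ⌊na/q⌋`, the Fourier coefficient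
`Σ_a h(a)·conj(χ(a))` (summing over `1 ≤ a ≤ q−1` with `p ∤ a`) is nonzero. -/
theorem stmt5 (p r n q : ℕ) (hp : p.Prime) (hq : q = p ^ r) (hn : 2 ≤ n)
    (hpn : ¬ p ∣ n) (χ : DirichletCharacter ℂ q) (hχ : χ (-1) = -1) :
    ∑ a ∈ (range q).filter (fun a => ¬ p ∣ a),
        (((n : ℂ) - 1) / 2 - ((n * a / q : ℕ) : ℂ)) * (starRingEnd ℂ) (χ (a : ZMod q))
      ≠ 0 := by
  subst hq
  have : NeZero p := ⟨hp.ne_zero⟩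
  have hχ1 : χ ≠ 1 := ne_one_of_odd hχ
  have hr : r ≠ 0 := fun h ↦ hχ1 (DirichletCharacter.level_one' _ (by rw [h, pow_zero]))
  simpa only [coprime_prime_pow_iff_not_dvd hp hr] using
    (stmt5_general hn ((coprime_prime_pow_iff_not_dvd hp hr n).2 hpn) hχ).2
      fun l ↦ primitiveCharacter_apply_primeFactor_ne_one_of_prime_pow hp hχ1
end

section
/- Let p be a prime, q = p^r, and χ a primitive Dirichlet character modulo q with χ(−1) = −1. Then S_q(conj(χ)) := Σ_{a=0}^{q−1} a·conj(χ(a)) satisfies S_q(conj(χ)) = −(q·τ_q(conj(χ))/(πi))·L(1,χ), where τ_q(ψ) = Σ_{a=0}^{q−1} e^{2πia/q} ψ(a) is the Gauss sum and L(1,χ) = Σ_{m=1}^∞ χ(m)/m. In particular S_q(conj(χ)) ≠ 0. -/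
open Finset

/-!
Since `χ` is primitive and odd, the discrete Fourier transform of `conj χ` is `-τ(conj χ) · χ`, so
`-τ(conj χ) L(1, χ) = ∑ a, conj χ(a) ∑ n, e(-an/q) / n`. By oddness only the sine part of the inner
series survives, and the sawtooth series `∑ n, sin(2πnx) / n = π (1/2 - x)` for `0 < x < 1` turns
the right-hand side into `(πi / q) S_q(conj χ)`. It is nonzero since `τ(conj χ)` and `L(1, χ)` are.

The series at `s = 1` converge only conditionally. Abel summation writes a Dirichlet series with
bounded partial sums of coefficients as `s` times a Mellin transform that is holomorphic for
`0 < re s`; by the identity theorem, the series therefore converges there to the analytic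
continuation of its sum. Abel's limit theorem evaluates `∑ n, zⁿ / n` on the unit circle.
-/

section DirichletSeries

open Complex Filter Asymptotics MeasureTheory Topology

/-- The summatory function `t ↦ ∑ k ≤ t, f k` of an arithmetic function `f`. The value `f 0` is
left out because it does not contribute to the Dirichlet series `∑ f n / n ^ s`. -/
noncomputable def summatory (f : ℕ → ℂ) (t : ℝ) : ℂ :=
  ∑ k ∈ Icc 1 ⌊t⌋₊, f k

variable {f : ℕ → ℂ} {r : ℝ} {s : ℂ}

lemma summatory_of_lt_one {t : ℝ} (ht : t < 1) : summatory f t = 0 := by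
  simp [summatory, Nat.floor_eq_zero.mpr ht]

lemma locallyIntegrableOn_summatory (f : ℕ → ℂ) :
    LocallyIntegrableOn (summatory f) (Set.Ioi 0) := by
  have h := locallyIntegrableOn_mul_sum_Icc f (m := 1) le_rfl
    (locallyIntegrableOn_const (1 : ℂ) (s := Set.Ici (0 : ℝ)) (μ := volume))
  simpa only [one_mul] using! h.mono_set Set.Ioi_subset_Ici_self

lemma summatory_isBigO_rpow (hr : 0 ≤ r)
    (hO : (fun n ↦ ∑ k ∈ Icc 1 n, f k) =O[atTop] fun n ↦ (n : ℝ) ^ r) :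
    summatory f =O[atTop] fun t ↦ t ^ r :=
  (hO.comp_tendsto tendsto_nat_floor_atTop).trans <|
    isEquivalent_nat_floor.isBigO.rpow hr (eventually_ge_atTop 0)

lemma mellin_summatory_neg (f : ℕ → ℂ) (s : ℂ) :
    mellin (summatory f) (-s) =
      ∫ t in Set.Ioi (1 : ℝ), (t : ℂ) ^ (-s - 1) * summatory f t := by
  rw [← integral_Ici_eq_integral_Ioi]
  refine setIntegral_eq_of_subset_of_forall_sdiff_eq_zero measurableSet_Ioi
    (fun t ht ↦ zero_lt_one.trans_le (Set.mem_Ici.mp ht)) fun t ht ↦ ?_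
  rw [summatory_of_lt_one (not_le.mp ht.2), smul_zero]

lemma differentiableAt_mellin_summatory_neg (hr : 0 ≤ r)
    (hO : (fun n ↦ ∑ k ∈ Icc 1 n, f k) =O[atTop] fun n ↦ (n : ℝ) ^ r) (hs : r < s.re) :
    DifferentiableAt ℂ (fun z ↦ mellin (summatory f) (-z)) s := by
  have hzero : summatory f =ᶠ[𝓝[>] 0] 0 := by
    filter_upwards [nhdsWithin_le_nhds (gt_mem_nhds zero_lt_one)] with t ht
      using summatory_of_lt_one ht
  have hmellin : DifferentiableAt ℂ (mellin (summatory f)) (-s) :=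
    mellin_differentiableAt_of_isBigO_rpow (a := -r) (b := -s.re - 1)
      (locallyIntegrableOn_summatory f) (by simpa only [neg_neg] using summatory_isBigO_rpow hr hO)
      (by simpa using hs) (hzero.isBigO.trans (isBigO_zero _ _)) (by simp)
  exact hmellin.comp s differentiableAt_id.neg

lemma tendsto_natCast_cpow_neg_mul_of_isBigO {A : ℕ → ℂ} (hA : A =O[atTop] fun n ↦ (n : ℝ) ^ r)
    (hs : r < s.re) : Tendsto (fun n : ℕ ↦ (n : ℂ) ^ (-s) * A n) atTop (𝓝 0) := by
  have hpow : (fun n : ℕ ↦ (n : ℂ) ^ (-s)) =O[atTop] fun n ↦ (n : ℝ) ^ (-s.re) :=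
    isBigO_norm_left.mp <| (norm_ofReal_cpow_eventually_eq_atTop _).isBigO.natCast_atTop
  have hlim : Tendsto (fun n : ℕ ↦ (n : ℝ) ^ (-(s.re - r))) atTop (𝓝 0) :=
    (tendsto_rpow_neg_atTop (sub_pos.mpr hs)).comp tendsto_natCast_atTop_atTop
  exact (hpow.mul_atTop_rpow_natCast_of_isBigO_rpow _ _ _ hA (by linarith)).trans_tendsto hlim

lemma sum_Icc_zero_term_zero (f : ℕ → ℂ) (n : ℕ) :
    ∑ k ∈ Icc 0 n, LSeries.term f 0 k = ∑ k ∈ Icc 1 n, f k := by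
  rw [← insert_Icc_add_one_left_eq_Icc n.zero_le, sum_insert (by simp), LSeries.term_zero, zero_add]
  exact sum_congr rfl fun k hk ↦ by simp [(zero_lt_one.trans_le (mem_Icc.mp hk).1).ne']

lemma term_eq_cpow_mul_term_zero (f : ℕ → ℂ) (s : ℂ) (n : ℕ) :
    LSeries.term f s n = (n : ℂ) ^ (-s) * LSeries.term f 0 n := by
  rcases eq_or_ne n 0 with rfl | hn
  · simp
  · simp [LSeries.term_of_ne_zero hn, cpow_neg, div_eq_inv_mul]

theorem tendsto_sum_term_mul_mellin_summatory (hr : 0 ≤ r)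
    (hO : (fun n ↦ ∑ k ∈ Icc 1 n, f k) =O[atTop] fun n ↦ (n : ℝ) ^ r) (hs : r < s.re) :
    Tendsto (fun N ↦ ∑ n ∈ range N, LSeries.term f s n) atTop
      (𝓝 (s * mellin (summatory f) (-s))) := by
  have hs₀ : -s ≠ 0 := neg_ne_zero.mpr <| ne_zero_of_re_pos (hr.trans_lt hs)
  have hdiff (t : ℝ) (ht : t ∈ Set.Ici 1) : DifferentiableAt ℝ (fun t : ℝ ↦ (t : ℂ) ^ (-s)) t :=
    differentiableAt_id.ofReal_cpow_const (zero_lt_one.trans_le ht).ne' hs₀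
  have hderiv : LocallyIntegrableOn (deriv fun t : ℝ ↦ (t : ℂ) ^ (-s)) (Set.Ici 1) :=
    (Iff.mpr integrableOn_Ici_iff_integrableOn_Ioi <| integrableOn_Ioi_deriv_ofReal_cpow zero_lt_one
      (by simpa using hr.trans_lt hs)).locallyIntegrableOn
  have hdom : (fun t ↦ deriv (fun t : ℝ ↦ (t : ℂ) ^ (-s)) t * summatory f t) =O[atTop]
      fun t ↦ t ^ ((-s).re - 1 + r) :=
    (isBigO_deriv_ofReal_cpow_const_atTop _).mul_atTop_rpow_of_isBigO_rpow _ r _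
      (summatory_isBigO_rpow hr hO) le_rfl
  have hrpow : IntegrableAtFilter (fun t : ℝ ↦ t ^ ((-s).re - 1 + r)) atTop :=
    integrableAtFilter_rpow_atTop_iff.mpr (by rw [neg_re]; linarith)
  have habel := tendsto_sum_mul_atTop_nhds_one_sub_integral₀ _ (LSeries.term_zero f 0)
    hdiff hderiv
    (by simpa only [sum_Icc_zero_term_zero] using! tendsto_natCast_cpow_neg_mul_of_isBigO hO hs)
    (by simpa only [sum_Icc_zero_term_zero] using! hdom) hrpow
  rw [← tendsto_add_atTop_iff_nat 1]
  simp_rw [Nat.range_succ_eq_Icc_zero, term_eq_cpow_mul_term_zero f s]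
  convert! habel using 2
  rw [mellin_summatory_neg, zero_sub, ← integral_const_mul, ← integral_neg]
  refine setIntegral_congr_fun measurableSet_Ioi fun t ht ↦ ?_
  simp only [deriv_ofReal_cpow_const (zero_lt_one.trans ht).ne' hs₀, sum_Icc_zero_term_zero,
    summatory]
  ring

theorem tendsto_sum_term_of_LSeriesHasSum {F : ℂ → ℂ} {x : ℝ} (hr : 0 ≤ r)
    (hO : (fun n ↦ ∑ k ∈ Icc 1 n, f k) =O[atTop] fun n ↦ (n : ℝ) ^ r)
    (hF : DifferentiableOn ℂ F {z | r < z.re}) (hx : ∀ z, x < z.re → LSeriesHasSum f z (F z))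
    (hs : r < s.re) :
    Tendsto (fun N ↦ ∑ n ∈ range N, LSeries.term f s n) atTop (𝓝 (F s)) := by
  set G : ℂ → ℂ := fun z ↦ z * mellin (summatory f) (-z)
  have hopen (y : ℝ) : IsOpen {z : ℂ | y < z.re} := isOpen_lt continuous_const continuous_re
  have hG : DifferentiableOn ℂ G {z | r < z.re} := fun z hz ↦
    (differentiableAt_id.mul
      (differentiableAt_mellin_summatory_neg hr hO hz)).differentiableWithinAt
  let z₀ : ℂ := ↑(max r x + 1)
  have hz₀ : max r x < z₀.re := by simp [z₀]
  have hGF : G =ᶠ[𝓝 z₀] F := by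
    filter_upwards [(hopen _).mem_nhds hz₀] with z hz
    exact tendsto_nhds_unique
      (tendsto_sum_term_mul_mellin_summatory hr hO ((le_max_left r x).trans_lt hz))
      (hx z ((le_max_right r x).trans_lt hz)).tendsto_sum_nat
  have hEq : Set.EqOn G F {z | r < z.re} :=
    (hG.analyticOnNhd (hopen r)).eqOn_of_preconnected_of_eventuallyEq
      (hF.analyticOnNhd (hopen r)) (convex_halfSpace_re_gt r).isPreconnected
      ((le_max_left r x).trans_lt hz₀) hGF
  exact hEq hs ▸ tendsto_sum_term_mul_mellin_summatory hr hO hs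

end DirichletSeries

section ExpZeta

open Complex Filter Asymptotics Topology HurwitzZeta
open scoped Real

lemma isBigO_sum_pow_of_norm_le_one {z : ℂ} (hz : ‖z‖ ≤ 1) (hz₁ : z ≠ 1) :
    (fun n : ℕ ↦ ∑ k ∈ Icc 1 n, z ^ k) =O[atTop] fun n ↦ (n : ℝ) ^ (0 : ℝ) := by
  refine .of_bound (2 / ‖z - 1‖) (.of_forall fun n ↦ ?_)
  rw [← Ico_add_one_right_eq_Icc, geom_sum_Ico hz₁ (by simp), norm_div, Real.rpow_zero, norm_one,
    mul_one]
  gcongr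
  calc ‖z ^ (n + 1) - z ^ 1‖ ≤ ‖z ^ (n + 1)‖ + ‖z ^ 1‖ := norm_sub_le _ _
    _ ≤ 1 + 1 := by
      simp only [norm_pow]
      exact add_le_add (pow_le_one₀ (norm_nonneg _) hz) (pow_le_one₀ (norm_nonneg _) hz)
    _ = 2 := one_add_one_eq_two

lemma exp_two_pi_mul_I_mul_ne_one {x : ℝ} (hx : (x : UnitAddCircle) ≠ 0) :
    cexp (2 * π * I * x) ≠ 1 := by
  contrapose! hx
  obtain ⟨n, hn⟩ := Complex.exp_eq_one_iff.mp hx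
  have hxn : (x : ℂ) = n := mul_left_cancel₀ two_pi_I_ne_zero (hn.trans (mul_comm _ _))
  exact (AddCircle.coe_eq_zero_iff 1).mpr ⟨n, (zsmul_one n).trans (by exact_mod_cast hxn.symm)⟩

lemma norm_exp_two_pi_mul_I_mul (x : ℝ) : ‖cexp (2 * π * I * x)‖ = 1 := by
  simp [Complex.norm_exp]

theorem tendsto_sum_term_exp {x : ℝ} (hx : (x : UnitAddCircle) ≠ 0) {s : ℂ} (hs : 0 < s.re) :
    Tendsto (fun N ↦ ∑ n ∈ range N, LSeries.term (fun n ↦ cexp (2 * π * I * x * n)) s n) atTop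
      (𝓝 (expZeta x s)) := by
  have hpow (n : ℕ) : cexp (2 * π * I * x * n) = cexp (2 * π * I * x) ^ n := by
    rw [mul_comm, Complex.exp_nat_mul]
  refine tendsto_sum_term_of_LSeriesHasSum (x := 1) le_rfl ?_
    (differentiable_expZeta_of_ne_zero hx).differentiableOn (fun z hz ↦ LSeriesHasSum_exp x hz) hs
  simpa only [hpow] using isBigO_sum_pow_of_norm_le_one
    (norm_exp_two_pi_mul_I_mul x).le (exp_two_pi_mul_I_mul_ne_one hx)

lemma one_sub_mem_slitPlane {z : ℂ} (hz : ‖z‖ ≤ 1) (hz₁ : z ≠ 1) : 1 - z ∈ slitPlane := by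
  refine mem_slitPlane_iff.mpr <| or_iff_not_imp_right.mpr fun him ↦ ?_
  have him₀ : z.im = 0 := by simpa using him
  have hre : z.re ≠ 1 := fun h ↦ hz₁ (Complex.ext h him₀)
  simpa using ((re_le_norm z).trans hz).lt_of_ne hre

lemma eq_neg_log_of_tendsto_sum_pow_div {z L : ℂ} (hz : ‖z‖ ≤ 1) (hz₁ : z ≠ 1)
    (hL : Tendsto (fun N ↦ ∑ n ∈ range N, z ^ n / n) atTop (𝓝 L)) : L = -log (1 - z) := by
  have hslit : 1 - z ∈ slitPlane := one_sub_mem_slitPlane hz hz₁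
  have habel : Tendsto (fun t : ℝ ↦ ∑' n : ℕ, z ^ n / n * (t : ℂ) ^ n) (𝓝[<] 1) (𝓝 L) :=
    tendsto_map'_iff.mp (tendsto_tsum_powerSeries_nhdsWithin_lt hL)
  have hlog : Tendsto (fun t : ℝ ↦ -log (1 - z * t)) (𝓝[<] 1) (𝓝 (-log (1 - z))) := by
    have hcont : ContinuousAt (fun t : ℝ ↦ -log (1 - z * t)) 1 := by
      refine (ContinuousAt.clog (by fun_prop) ?_).neg
      simpa using hslit
    simpa using hcont.tendsto.mono_left nhdsWithin_le_nhds
  refine tendsto_nhds_unique habel (hlog.congr' ?_)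
  filter_upwards [Ioo_mem_nhdsLT (zero_lt_one' ℝ)] with t ht
  have hzt : ‖z * t‖ < 1 := by
    rw [norm_mul, norm_real, Real.norm_of_nonneg ht.1.le]
    exact mul_lt_one_of_nonneg_of_lt_one_right hz ht.1.le ht.2
  rw [← (hasSum_taylorSeries_neg_log hzt).tsum_eq]
  simp_rw [mul_pow, mul_div_right_comm]

theorem expZeta_one {x : ℝ} (hx : (x : UnitAddCircle) ≠ 0) :
    expZeta x 1 = -log (1 - cexp (2 * π * I * x)) := by
  refine eq_neg_log_of_tendsto_sum_pow_div (norm_exp_two_pi_mul_I_mul x).le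
    (exp_two_pi_mul_I_mul_ne_one hx) ?_
  refine (tendsto_sum_term_exp hx (s := 1) (by simp)).congr fun N ↦ sum_congr rfl fun n _ ↦ ?_
  rw [LSeries.term_of_ne_zero' one_ne_zero, cpow_one, mul_comm, Complex.exp_nat_mul]

lemma one_sub_exp_two_mul_I (α : ℝ) :
    1 - cexp (2 * α * I) =
      (2 * Real.sin α : ℝ) * (cos (α - π / 2 : ℝ) + sin (α - π / 2 : ℝ) * I) := by
  rw [exp_mul_I, Complex.cos_two_mul, Complex.sin_two_mul]
  push_cast
  rw [Complex.cos_sub_pi_div_two, Complex.sin_sub_pi_div_two]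
  linear_combination -2 * Complex.sin_sq_add_cos_sq (α : ℂ)

lemma arg_one_sub_exp_two_mul_I {α : ℝ} (hα : α ∈ Set.Ioo 0 π) :
    arg (1 - cexp (2 * α * I)) = α - π / 2 := by
  rw [one_sub_exp_two_mul_I]
  refine arg_mul_cos_add_sin_mul_I (mul_pos two_pos (Real.sin_pos_of_mem_Ioo hα)) ⟨?_, ?_⟩
  · linarith [hα.1, Real.pi_pos]
  · linarith [hα.2, Real.pi_pos]

theorem sinZeta_one {x : ℝ} (hx : x ∈ Set.Ioo 0 1) : sinZeta x 1 = π * (1 / 2 - x) := by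
  have hx₀ : (x : UnitAddCircle) ≠ 0 :=
    (AddCircle.coe_eq_zero_iff_of_mem_Ico (Set.Ioo_subset_Ico_self hx)).not.mpr hx.1.ne'
  set w : ℂ := 1 - cexp (2 * π * I * x) with hw
  have hconj : 1 - cexp (2 * π * I * (-x : ℝ)) = starRingEnd ℂ w := by
    simp [hw, ← Complex.exp_conj, conj_ofNat]
  have harg : arg w = π * x - π / 2 := by
    rw [show w = 1 - cexp (2 * (π * x : ℝ) * I) by
      rw [hw, ofReal_mul, ← mul_assoc, mul_right_comm _ I]]
    exact arg_one_sub_exp_two_mul_I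
      ⟨mul_pos Real.pi_pos hx.1, mul_lt_of_lt_one_right Real.pi_pos hx.2⟩
  have hargπ : arg w ≠ π := by
    rw [harg]
    nlinarith [hx.2, Real.pi_pos]
  have hlog : log w - starRingEnd ℂ (log w) = 2 * (π * x - π / 2) * I := by
    rw [sub_conj, log_im, harg]
    push_cast
    rfl
  rw [sinZeta_eq, expZeta_one hx₀, ← AddCircle.coe_neg, expZeta_one (by simpa using hx₀), ← hw,
    hconj, log_conj _ hargπ]
  field_simp
  linear_combination -hlog

end ExpZeta

section ZModLFunction

open Complex Filter Topology HurwitzZeta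
open scoped Real ZMod

variable {N : ℕ} [NeZero N]

lemma stdAddChar_mul_natCast (j : ZMod N) (n : ℕ) :
    ZMod.stdAddChar (j * (n : ZMod N)) = cexp (2 * π * I * (j.val / N : ℝ) * n) := by
  rw [mul_comm, ← nsmul_eq_mul, AddChar.map_nsmul_eq_pow, ZMod.stdAddChar_apply,
    ZMod.toCircle_apply, ← Complex.exp_nat_mul]
  push_cast
  ring_nf

lemma tendsto_sum_term_stdAddChar {j : ZMod N} (hj : j ≠ 0) {s : ℂ} (hs : 0 < s.re) :
    Tendsto (fun M ↦ ∑ n ∈ range M,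
        LSeries.term (fun n ↦ ZMod.stdAddChar (j * (n : ZMod N))) s n) atTop
      (𝓝 (expZeta (ZMod.toAddCircle j) s)) := by
  have hj' : ZMod.toAddCircle j ≠ 0 := (map_ne_zero_iff _ (ZMod.toAddCircle_injective N)).mpr hj
  rw [ZMod.toAddCircle_apply] at hj' ⊢
  simpa only [stdAddChar_mul_natCast] using tendsto_sum_term_exp hj' hs

theorem tendsto_sum_term_dft {Φ : ZMod N → ℂ} (hΦ : Φ 0 = 0) {s : ℂ} (hs : 0 < s.re) :
    Tendsto (fun M ↦ ∑ n ∈ range M, LSeries.term (fun n ↦ 𝓕 Φ (n : ZMod N)) s n) atTop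
      (𝓝 (ZMod.LFunction (𝓕 Φ) s)) := by
  have hterm (n : ℕ) : LSeries.term (fun n ↦ 𝓕 Φ (n : ZMod N)) s n =
      ∑ j, Φ j * LSeries.term (fun n ↦ ZMod.stdAddChar (-j * (n : ZMod N))) s n := by
    rcases eq_or_ne n 0 with rfl | hn
    · simp
    · simp only [LSeries.term_of_ne_zero hn, ZMod.dft_apply, sum_div, smul_eq_mul]
      exact sum_congr rfl fun j _ ↦ by rw [neg_mul]; ring
  simp_rw [hterm, sum_comm (s := range _), ← mul_sum, ZMod.LFunction_dft Φ (.inl hΦ)]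
  refine tendsto_finsetSum _ fun j _ ↦ ?_
  rcases eq_or_ne j 0 with rfl | hj
  · simp [hΦ]
  · exact (tendsto_sum_term_stdAddChar (neg_ne_zero.mpr hj) hs).const_mul _

theorem tendsto_sum_term_LFunction {Φ : ZMod N → ℂ} (hΦ : ∑ j, Φ j = 0) {s : ℂ} (hs : 0 < s.re) :
    Tendsto (fun M ↦ ∑ n ∈ range M, LSeries.term (fun n ↦ Φ (n : ZMod N)) s n) atTop
      (𝓝 (ZMod.LFunction Φ s)) := by
  obtain ⟨Ψ, rfl⟩ := ZMod.dft.surjective Φ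
  refine tendsto_sum_term_dft ?_ hs
  simpa [← ZMod.dft_apply_zero, ZMod.dft_dft, NeZero.ne N] using hΦ

lemma sinZeta_toAddCircle_one {j : ZMod N} (hj : j ≠ 0) :
    sinZeta (ZMod.toAddCircle j) 1 = π * (1 / 2 - j.val / N) := by
  have hN : (0 : ℝ) < N := Nat.cast_pos.mpr (NeZero.pos N)
  have hval : (0 : ℝ) < j.val := Nat.cast_pos.mpr (ZMod.val_pos.mpr hj)
  have hlt : (j.val : ℝ) < N := Nat.cast_lt.mpr j.val_lt
  rw [ZMod.toAddCircle_apply, sinZeta_one ⟨div_pos hval hN, (div_lt_one hN).mpr hlt⟩]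
  push_cast
  rfl

theorem LFunction_dft_one_of_odd {Φ : ZMod N → ℂ} (hΦ : Φ.Odd) :
    ZMod.LFunction (𝓕 Φ) 1 = π * I / N * ∑ j : ZMod N, (j.val : ℂ) * Φ j := by
  have hcos : ∑ j, cosZeta (ZMod.toAddCircle j) 1 * Φ j = 0 :=
    (Function.Even.mul_odd (fun j ↦ by rw [map_neg, cosZeta_neg]) hΦ).sum_eq_zero
  have hterm (j : ZMod N) : Φ j * expZeta (ZMod.toAddCircle (-j)) 1 =
      cosZeta (ZMod.toAddCircle j) 1 * Φ j - π * I / 2 * Φ j + π * I / N * (j.val * Φ j) := by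
    rcases eq_or_ne j 0 with rfl | hj
    · simp [hΦ.map_zero]
    rw [expZeta, map_neg, cosZeta_neg, sinZeta_neg, sinZeta_toAddCircle_one hj]
    ring
  rw [ZMod.LFunction_dft Φ (.inl hΦ.map_zero)]
  simp_rw [hterm, sum_add_distrib, sum_sub_distrib, ← mul_sum, hcos, hΦ.sum_eq_zero]
  ring

end ZModLFunction

section OddCharacter

open Complex Filter Topology
open scoped Real ZMod ComplexConjugate

lemma character_ne_one_of_odd {R : Type*} [CommRing R] [NeZero (2 : R)] {N : ℕ}
    {χ : DirichletCharacter R N} (hχ : χ.Odd) : χ ≠ 1 := by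
  rintro rfl
  have h : (1 : R) = -1 := (MulChar.one_apply isUnit_one.neg).symm.trans hχ
  exact two_ne_zero (one_add_one_eq_two.symm.trans (eq_neg_iff_add_eq_zero.mp h))

lemma character_odd_inv {K : Type*} [Field K] {N : ℕ} {χ : DirichletCharacter K N} (hχ : χ.Odd) :
    χ⁻¹.Odd := by
  rw [DirichletCharacter.Odd, MulChar.inv_apply_eq_inv', hχ, inv_neg_one]

lemma character_isPrimitive_inv {R : Type*} [CommMonoidWithZero R] {N : ℕ}
    {χ : DirichletCharacter R N} (hχ : χ.IsPrimitive) : χ⁻¹.IsPrimitive :=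
  χ.conductor_inv.trans hχ

variable {N : ℕ} [NeZero N] {χ : DirichletCharacter ℂ N}

lemma gaussSum_stdAddChar_ne_zero (hχ : χ.IsPrimitive) : gaussSum χ ZMod.stdAddChar ≠ 0 := by
  intro h
  have hdft : 𝓕 (χ : ZMod N → ℂ) = 0 := by
    ext k
    rw [hχ.fourierTransform_eq_inv_mul_gaussSum, h, mul_zero, Pi.zero_apply]
  have hone : χ 1 = 0 := congrFun (ZMod.dft.map_eq_zero_iff.mp hdft) 1
  exact one_ne_zero ((map_one χ).symm.trans hone)

theorem tendsto_sum_character_div (hχ : χ ≠ 1) :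
    Tendsto (fun M ↦ ∑ m ∈ range M, χ (m : ZMod N) / (m : ℂ)) atTop (𝓝 (χ.LFunction 1)) := by
  refine (tendsto_sum_term_LFunction (MulChar.sum_eq_zero_of_ne_one hχ) (s := 1) (by simp)).congr
    fun M ↦ sum_congr rfl fun m _ ↦ ?_
  rw [LSeries.term_of_ne_zero' one_ne_zero, cpow_one]

lemma gaussSum_inv_mul_LFunction_one (hodd : χ.Odd) (hprim : χ.IsPrimitive) :
    -gaussSum χ⁻¹ ZMod.stdAddChar * χ.LFunction 1 =
      π * I / N * ∑ a : ZMod N, (a.val : ℂ) * χ⁻¹ a := by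
  have hdft : 𝓕 ⇑χ⁻¹ = fun k ↦ -gaussSum χ⁻¹ ZMod.stdAddChar * χ k := by
    ext k
    rw [(character_isPrimitive_inv hprim).fourierTransform_eq_inv_mul_gaussSum, inv_inv,
      hodd.to_fun]
    ring
  rw [← LFunction_dft_one_of_odd (character_odd_inv hodd).to_fun, hdft]
  simp only [DirichletCharacter.LFunction, ZMod.LFunction, mul_sum]
  exact sum_congr rfl fun j _ ↦ by ring

theorem sum_val_mul_inv_eq (hodd : χ.Odd) (hprim : χ.IsPrimitive) :
    ∑ a : ZMod N, (a.val : ℂ) * χ⁻¹ a =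
      -(N * gaussSum χ⁻¹ ZMod.stdAddChar / (π * I)) * χ.LFunction 1 := by
  have hN : (N : ℂ) ≠ 0 := NeZero.ne _
  have hπ : (π : ℂ) ≠ 0 := ofReal_ne_zero.mpr Real.pi_ne_zero
  have h := gaussSum_inv_mul_LFunction_one hodd hprim
  field_simp at h ⊢
  linear_combination -h

theorem sum_val_mul_inv_ne_zero (hodd : χ.Odd) (hprim : χ.IsPrimitive) :
    ∑ a : ZMod N, (a.val : ℂ) * χ⁻¹ a ≠ 0 := by
  intro h
  have hzero := gaussSum_inv_mul_LFunction_one hodd hprim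
  rw [h, mul_zero] at hzero
  exact mul_ne_zero
    (neg_ne_zero.mpr (gaussSum_stdAddChar_ne_zero (character_isPrimitive_inv hprim)))
    (DirichletCharacter.LFunction_apply_one_ne_zero (character_ne_one_of_odd hodd)) hzero

lemma sum_zmod_val {M : Type*} [AddCommMonoid M] (F : ℕ → M) :
    ∑ a : ZMod N, F a.val = ∑ a ∈ range N, F a := by
  obtain ⟨n, rfl⟩ := Nat.exists_eq_succ_of_ne_zero (NeZero.ne N)
  exact Fin.sum_univ_eq_sum_range F (n + 1)

lemma sum_val_mul_inv_eq_sum_range (χ : DirichletCharacter ℂ N) :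
    ∑ a : ZMod N, (a.val : ℂ) * χ⁻¹ a = ∑ a ∈ range N, (a : ℂ) * conj (χ (a : ZMod N)) := by
  rw [← sum_zmod_val fun a ↦ (a : ℂ) * conj (χ (a : ZMod N))]
  simp only [ZMod.natCast_zmod_val, ← MulChar.star_apply', starRingEnd_apply]

lemma gaussSum_inv_stdAddChar_eq_sum_range (χ : DirichletCharacter ℂ N) :
    gaussSum χ⁻¹ ZMod.stdAddChar =
      ∑ a ∈ range N, exp (2 * π * I * a / N) * conj (χ (a : ZMod N)) := by
  rw [← sum_zmod_val fun a ↦ exp (2 * π * I * a / N) * conj (χ (a : ZMod N)), gaussSum]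
  simp only [ZMod.natCast_zmod_val, ← MulChar.star_apply', starRingEnd_apply,
    ZMod.stdAddChar_apply, ZMod.toCircle_apply, mul_comm]

end OddCharacter

theorem stmt6_general (q : ℕ) [NeZero q]
    (χ : DirichletCharacter ℂ q) (hχ : χ (-1) = -1) (hprim : χ.IsPrimitive)
    (S τ : ℂ)
    (hS : S = ∑ a ∈ range q, (a : ℂ) * (starRingEnd ℂ) (χ (a : ZMod q)))
    (hτ : τ = ∑ a ∈ range q,
        Complex.exp (2 * Real.pi * Complex.I * (a : ℂ) / (q : ℂ)) *
          (starRingEnd ℂ) (χ (a : ZMod q))) :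
    ∃ L : ℂ,
      Filter.Tendsto (fun N : ℕ => ∑ m ∈ range N, χ (m : ZMod q) / (m : ℂ))
        Filter.atTop (nhds L) ∧
      S = -((q : ℂ) * τ / ((Real.pi : ℂ) * Complex.I)) * L ∧ S ≠ 0 := by
  have hS' := hS.trans (sum_val_mul_inv_eq_sum_range χ).symm
  have hτ' := hτ.trans (gaussSum_inv_stdAddChar_eq_sum_range χ).symm
  refine ⟨χ.LFunction 1, tendsto_sum_character_div (character_ne_one_of_odd hχ), ?_, ?_⟩
  · rw [hS', hτ', sum_val_mul_inv_eq hχ hprim]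
  · exact hS' ▸ sum_val_mul_inv_ne_zero hχ hprim

/-- Let `p` be a prime, `q = p^r`, and `χ` a primitive Dirichlet character modulo `q`
with `χ(−1) = −1`. Then `S_q(conj χ) = Σ_{a=0}^{q−1} a·conj(χ(a))` satisfies
`S_q(conj χ) = −(q·τ_q(conj χ)/(πi))·L(1,χ)`, where `τ_q(ψ) = Σ_a e^{2πia/q}ψ(a)` is the
Gauss sum and `L(1,χ) = Σ_{m≥1} χ(m)/m` (the limit of the partial sums). In particular
`S_q(conj χ) ≠ 0`. -/
theorem stmt6 (p r q : ℕ) (hp : p.Prime) (hq : q = p ^ r)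
    (χ : DirichletCharacter ℂ q) (hχ : χ (-1) = -1) (hprim : χ.IsPrimitive)
    (S τ : ℂ)
    (hS : S = ∑ a ∈ range q, (a : ℂ) * (starRingEnd ℂ) (χ (a : ZMod q)))
    (hτ : τ = ∑ a ∈ range q,
        Complex.exp (2 * Real.pi * Complex.I * (a : ℂ) / (q : ℂ)) *
          (starRingEnd ℂ) (χ (a : ZMod q))) :
    ∃ L : ℂ,
      Filter.Tendsto (fun N : ℕ => ∑ m ∈ range N, χ (m : ZMod q) / (m : ℂ))
        Filter.atTop (nhds L) ∧
      S = -((q : ℂ) * τ / ((Real.pi : ℂ) * Complex.I)) * L ∧ S ≠ 0 := by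
  have : NeZero q := ⟨hq ▸ pow_ne_zero r hp.ne_zero⟩
  exact stmt6_general q χ hχ hprim S τ hS hτ
end
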